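/- Let p be an odd prime, S = {x ∈ ℚ_p⁵ : 2x₁x₅ + 2x₂x₄ + x₃² = 1}, and for r ∈ ℕ let O_r = {x ∈ S : max_{1≤i≤5} ‖x_i‖ = p^r} (S is the disjoint union of the O_r). Let μ be a Borel measure on ℚ_p⁵ such that μ(ℚ_p⁵ \ S) = 0, μ(O_r) < ∞ for every r ∈ ℕ, 0 < μ(O₀), and μ is G-invariant, meaning that for every g ∈ G the pushforward of μ under v ↦ g·v equals μ. Then for every r ≥ 1: μ(O_r) = p^{3r}·(1 − p^{−2})·μ(O₀). -/

import Mathlib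

/-!
The measure of `O_r` is computed by cutting the orbits into cells, each of which is related by an
element of `G` to a cell inside the chart `‖y₄‖ = p^r` (coordinates are numbered `0, …, 4`). No
uniqueness theorem for invariant measures is needed.

In the chart of level `r` the coordinate `y₀` is determined by the others, and the unipotent radical
stabilising the last coordinate translates `y₁, y₂, y₃` by multiples of `y₄`. Hence (`cell`)
imposing congruences modulo `p^n₁, p^n₂, p^n₃` relative to the maximal norm on these three
coordinates divides the measure by `p^(n₁+n₂+n₃)`; the basic step is the equidistribution lemma
`equi`. Taking all `nᵢ = r` gives the image of the level `0` chart under `diag(p^r,1,1,1,p^{-r})`,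
so the level `r` chart has measure `p^{3r} a`, with `a` the measure of the level `0` chart
(`chart_scale`).

It remains to compare an orbit with its chart, which amounts to counting points on a quadric over
`𝔽_p`. The points with `y₄` not maximal and `y₃` maximal form, up to a Weyl element, a cell of
relative measure `1/p`. Let `Z` be the rest, where `y₃, y₄` are both small.
* For `r ≥ 1` the equation forces `y₂` to be small on `Z`. The parts of `Z` with `y₀` maximal and
  with `y₀` small are Weyl translates of cells of relative measures `1/p²` and `1/p³`.
* For `r = 0` the equation forces `y₂ ≡ ±1` on `Z`. The part with `y₀` a unit is a Weyl translate of
  two cells of relative measure `1/p²`, and since `y₀` is equidistributed modulo `p` on `Z`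
  (`Z1_zero`), the measure of `Z` is `p/(p-1)` times that, i.e. `2a/(p(p-1))`.

So `μ(O_r) = p^{3r} a (1 + p⁻¹ + p⁻² + p⁻³)` for `r ≥ 1`, while `μ(O_0) = a (p² + 1)/(p(p-1))`, and
the quotient is `p^{3r}(1 - p⁻²)`.
-/

open Matrix MeasureTheory
open scoped ENNReal

noncomputable section

variable (p : ℕ) [Fact p.Prime]

instance : MeasurableSpace ℚ_[p] := borel _
instance : BorelSpace ℚ_[p] := ⟨rfl⟩

/-- The 5×5 matrix `J` over `ℚ_p`. -/
def J5 : Matrix (Fin 5) (Fin 5) ℚ_[p] :=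
  Matrix.of fun i j => if (i : ℕ) + (j : ℕ) = 4 then 1 else 0

/-- The group `G = SO(3,2;ℚ_p)`. -/
def SO32 : Set (Matrix (Fin 5) (Fin 5) ℚ_[p]) :=
  {g | gᵀ * J5 p * g = J5 p ∧ g.det = 1}

/-- The sphere `S = {x : 2x₁x₅ + 2x₂x₄ + x₃² = 1}` (split case). -/
def Ssph : Set (Fin 5 → ℚ_[p]) :=
  {x | 2 * x 0 * x 4 + 2 * x 1 * x 3 + (x 2) ^ 2 = 1}

/-- The `K`-orbit `O_r = {x ∈ S : max ‖x_i‖ = p^r}`. -/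
def Orb (r : ℕ) : Set (Fin 5 → ℚ_[p]) :=
  {x ∈ Ssph p | (∀ i, ‖x i‖ ≤ (p : ℝ) ^ r) ∧ ∃ i, ‖x i‖ = (p : ℝ) ^ r}

/-! ### Equidistribution along one-parameter families -/

section

variable {p}

lemma two_norm (hp : p ≠ 2) : ‖(2 : ℚ_[p])‖ = 1 := by
  have h : ‖((2 : ℕ) : ℚ_[p])‖ = 1 := by
    rw [Padic.norm_natCast_eq_one_iff]
    exact (Nat.coprime_primes Fact.out Nat.prime_two).2 hp
  simpa using h

lemma norm_sub_le_max_padic (x y : ℚ_[p]) : ‖x - y‖ ≤ max ‖x‖ ‖y‖ := by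
  simpa [sub_eq_add_neg] using IsUltrametricDist.norm_add_le_max x (-y)

lemma one_lt_pR : (1 : ℝ) < p := by exact_mod_cast (Fact.out : p.Prime).one_lt

/-- Every `a` with `‖a‖ ≤ ‖b‖` is congruent to a multiple `t • b` with `t ∈ {0, …, pⁿ - 1}`,
modulo the ball of radius `p⁻ⁿ‖b‖`. -/
lemma exists_residue (n : ℕ) {a b : ℚ_[p]} (hab : ‖a‖ ≤ ‖b‖) (hb : b ≠ 0) :
    ∃ t ∈ Finset.range (p ^ n), ‖a - (t : ℚ_[p]) * b‖ * (p : ℝ) ^ n ≤ ‖b‖ := by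
  have hb0 : 0 < ‖b‖ := norm_pos_iff.2 hb
  have hp0 : (0 : ℝ) < (p : ℝ) ^ n := pow_pos (zero_lt_one.trans one_lt_pR) n
  have h1 : ‖a / b‖ ≤ 1 := by rw [norm_div]; exact (div_le_one hb0).2 hab
  let x : ℤ_[p] := ⟨a / b, h1⟩
  refine ⟨x.appr n, Finset.mem_range.2 (PadicInt.appr_lt x n), ?_⟩
  have h2 := (PadicInt.norm_le_pow_iff_mem_span_pow _ n).2 (PadicInt.appr_spec n x)
  rw [PadicInt.norm_def] at h2
  push_cast at h2
  have h3 : a - ((x.appr n : ℕ) : ℚ_[p]) * b = ((x : ℚ_[p]) - (x.appr n : ℕ)) * b := by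
    change _ = (a / b - _) * b
    field_simp
  rw [h3, norm_mul]
  rw [_root_.zpow_neg, zpow_natCast] at h2
  calc _ ≤ ((p : ℝ) ^ n)⁻¹ * ‖b‖ * (p : ℝ) ^ n := by gcongr
    _ = ‖b‖ := by field_simp

lemma residue_unique (n : ℕ) {a b : ℚ_[p]} (hb : b ≠ 0) {s t : ℕ} (hs : s < p ^ n) (ht : t < p ^ n)
    (h1 : ‖a - (s : ℚ_[p]) * b‖ * (p : ℝ) ^ n ≤ ‖b‖)
    (h2 : ‖a - (t : ℚ_[p]) * b‖ * (p : ℝ) ^ n ≤ ‖b‖) : s = t := by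
  have hb0 : 0 < ‖b‖ := norm_pos_iff.2 hb
  have hp0 : (0 : ℝ) < (p : ℝ) ^ n := pow_pos (zero_lt_one.trans one_lt_pR) n
  have h3 : ‖(((s : ℤ) - t : ℤ) : ℚ_[p])‖ * ‖b‖ * (p : ℝ) ^ n ≤ ‖b‖ := by
    rw [← norm_mul]
    have : (((s : ℤ) - t : ℤ) : ℚ_[p]) * b = (a - (t : ℚ_[p]) * b) - (a - (s : ℚ_[p]) * b) := by
      push_cast; ring
    rw [this]
    rcases le_max_iff.1 (norm_sub_le_max_padic (a - (t : ℚ_[p]) * b)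
      (a - (s : ℚ_[p]) * b)) with h | h
    · exact (mul_le_mul_of_nonneg_right h hp0.le).trans h2
    · exact (mul_le_mul_of_nonneg_right h hp0.le).trans h1
  have h4 : ‖(((s : ℤ) - t : ℤ) : ℚ_[p])‖ ≤ (p : ℝ) ^ (-(n : ℤ)) := by
    rw [_root_.zpow_neg, zpow_natCast, ← one_div, le_div_iff₀ hp0]
    by_contra! h
    nlinarith
  rw [Padic.norm_int_le_pow_iff_dvd] at h4
  have h5 : (s : ℤ) ≡ t [ZMOD ((p ^ n : ℕ) : ℤ)] := by
    refine (Int.modEq_iff_dvd.2 ?_).symm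
    exact_mod_cast h4
  exact ((Int.natCast_modEq_iff.1 h5).eq_of_lt_of_lt hs ht)

/-- `μ` is invariant under `SO(3,2;ℚ_p)`. -/
def InvMeas (μ : Measure (Fin 5 → ℚ_[p])) : Prop :=
  ∀ g ∈ SO32 p, Measure.map (fun v => g.mulVec v) μ = μ

lemma meas_mulVec (g : Matrix (Fin 5) (Fin 5) ℚ_[p]) : Measurable (fun v => g.mulVec v) :=
  (Continuous.matrix_mulVec continuous_const continuous_id).measurable

lemma InvMeas.preimage {μ : Measure (Fin 5 → ℚ_[p])} (h : InvMeas μ) {g : Matrix (Fin 5) (Fin 5) ℚ_[p]}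
    (hg : g ∈ SO32 p) {X : Set (Fin 5 → ℚ_[p])} (hX : MeasurableSet X) :
    μ.real ((fun v => g.mulVec v) ⁻¹' X) = μ.real X := by
  have := Measure.map_apply (μ := μ) (meas_mulVec g) hX
  rw [h g hg] at this
  rw [measureReal_def, measureReal_def, this]

/-- Let `X` be stable under the family `g t`, `t ∈ ℤ_p`, and suppose that `g t` acts on the
coordinate function `a` by `a ↦ a - t b` modulo `p⁻ⁿ‖b‖`. Then the `pⁿ` residue classes of `a / b`
modulo `pⁿ` cut `X` into translates of one another, so that the class of `0` has relative measure
`p⁻ⁿ`. -/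
lemma equi {μ : Measure (Fin 5 → ℚ_[p])} (hμ : InvMeas μ) (n : ℕ) {X : Set (Fin 5 → ℚ_[p])}
    (hX : MeasurableSet X) (a b : (Fin 5 → ℚ_[p]) → ℚ_[p]) (ha : Continuous a) (hb : Continuous b)
    (g : ℚ_[p] → Matrix (Fin 5) (Fin 5) ℚ_[p]) (hg : ∀ t, g t ∈ SO32 p)
    (hneg : ∀ t y, (g (-t)).mulVec ((g t).mulVec y) = y)
    (hgX : ∀ t, ‖t‖ ≤ 1 → ∀ y ∈ X, (g t).mulVec y ∈ X)
    (hgb : ∀ t, ‖t‖ ≤ 1 → ∀ y ∈ X, ‖b ((g t).mulVec y)‖ = ‖b y‖)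
    (hga : ∀ t, ‖t‖ ≤ 1 → ∀ y ∈ X,
      ‖a ((g t).mulVec y) - (a y - t * b y)‖ * (p : ℝ) ^ n ≤ ‖b y‖)
    (hab : ∀ y ∈ X, ‖a y‖ ≤ ‖b y‖ ∧ b y ≠ 0) :
    μ.real X = (p : ℝ) ^ n * μ.real {y | y ∈ X ∧ ‖a y‖ * (p : ℝ) ^ n ≤ ‖b y‖} := by
  set X₀ : Set (Fin 5 → ℚ_[p]) := {y | y ∈ X ∧ ‖a y‖ * (p : ℝ) ^ n ≤ ‖b y‖} with hX₀
  have hp0 : (0 : ℝ) < (p : ℝ) ^ n := pow_pos (zero_lt_one.trans one_lt_pR) n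
  have hmX₀ : MeasurableSet X₀ :=
    hX.inter (isClosed_le (ha.norm.mul continuous_const) hb.norm).measurableSet
  have hnat : ∀ t : ℕ, ‖(t : ℚ_[p])‖ ≤ 1 := fun t => by
    simpa using Padic.norm_int_le_one (p := p) (t : ℤ)
  have key : ∀ (t : ℕ) y, (g t).mulVec y ∈ X₀ ↔
      y ∈ X ∧ ‖a y - (t : ℚ_[p]) * b y‖ * (p : ℝ) ^ n ≤ ‖b y‖ := by
    intro t y
    have hmem : (g t).mulVec y ∈ X ↔ y ∈ X := by
      refine ⟨fun h => ?_, hgX t (hnat t) y⟩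
      have := hgX (-t) (by rw [norm_neg]; exact hnat t) _ h
      rwa [hneg] at this
    rw [hX₀, Set.mem_ofPred_eq, hmem]
    refine and_congr_right fun hy => ?_
    rw [hgb t (hnat t) y hy]
    have h1 := hga t (hnat t) y hy
    constructor <;> intro h
    · have e : a y - (t : ℚ_[p]) * b y = a ((g t).mulVec y) -
        (a ((g t).mulVec y) - (a y - t * b y)) := by ring
      rw [e]
      rcases le_max_iff.1 (norm_sub_le_max_padic (a ((g t).mulVec y))
        (a ((g t).mulVec y) - (a y - t * b y))) with h' | h'
      · exact (mul_le_mul_of_nonneg_right h' hp0.le).trans h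
      · exact (mul_le_mul_of_nonneg_right h' hp0.le).trans h1
    · have e : a ((g t).mulVec y) = (a ((g t).mulVec y) - (a y - t * b y)) +
        (a y - (t : ℚ_[p]) * b y) := by ring
      rw [e]
      rcases le_max_iff.1 (IsUltrametricDist.norm_add_le_max
        (a ((g t).mulVec y) - (a y - t * b y)) (a y - (t : ℚ_[p]) * b y)) with h' | h'
      · exact (mul_le_mul_of_nonneg_right h' hp0.le).trans h1
      · exact (mul_le_mul_of_nonneg_right h' hp0.le).trans h
  have hun : X = ⋃ t ∈ Finset.range (p ^ n), (fun v => (g (t : ℕ)).mulVec v) ⁻¹' X₀ := by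
    ext y
    simp only [Set.mem_iUnion, Set.mem_preimage, key, exists_prop]
    constructor
    · intro hy
      obtain ⟨t, ht, h⟩ := exists_residue n (hab y hy).1 (hab y hy).2
      exact ⟨t, ht, hy, h⟩
    · rintro ⟨t, -, hy, -⟩; exact hy
  have hdis : ((Finset.range (p ^ n) : Finset ℕ) : Set ℕ).PairwiseDisjoint
      (fun t : ℕ => (fun v => (g (t : ℕ)).mulVec v) ⁻¹' X₀) := by
    intro s hs t ht hst
    refine Set.disjoint_left.2 fun y h1 h2 => hst ?_
    rw [Set.mem_preimage, key] at h1 h2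
    exact residue_unique n (hab y h1.1).2 (by simpa using hs) (by simpa using ht) h1.2 h2.2
  have hm := measure_biUnion_finset (μ := μ) hdis (fun t _ => meas_mulVec (g (t : ℕ)) hmX₀)
  rw [← hun] at hm
  have hc : ∀ t ∈ Finset.range (p ^ n), μ ((fun v => (g (t : ℕ)).mulVec v) ⁻¹' X₀) = μ X₀ := by
    intro t _
    rw [← Measure.map_apply (meas_mulVec _) hmX₀, hμ _ (hg _)]
  rw [Finset.sum_congr rfl hc, Finset.sum_const, Finset.card_range, nsmul_eq_mul] at hm
  rw [measureReal_def, hm, ENNReal.toReal_mul, measureReal_def]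
  simp

/-! ### Elements of the orthogonal group -/

/-- The unipotent element moving coordinate `1` along coordinate `4`. -/
def gA (t : ℚ_[p]) : Matrix (Fin 5) (Fin 5) ℚ_[p] :=
  !![1, 0, 0, t, 0; 0, 1, 0, 0, -t; 0, 0, 1, 0, 0; 0, 0, 0, 1, 0; 0, 0, 0, 0, 1]

/-- The unipotent element moving coordinate `2` along coordinate `4`. -/
def gB (t : ℚ_[p]) : Matrix (Fin 5) (Fin 5) ℚ_[p] :=
  !![1, 0, t, 0, -(t ^ 2 / 2); 0, 1, 0, 0, 0; 0, 0, 1, 0, -t; 0, 0, 0, 1, 0; 0, 0, 0, 0, 1]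

/-- The unipotent element moving coordinate `3` along coordinate `4`. -/
def gC (t : ℚ_[p]) : Matrix (Fin 5) (Fin 5) ℚ_[p] :=
  !![1, t, 0, 0, 0; 0, 1, 0, 0, 0; 0, 0, 1, 0, 0; 0, 0, 0, 1, -t; 0, 0, 0, 0, 1]

/-- The torus element `diag(c, 1, 1, 1, c⁻¹)`. -/
def gD (c : ℚ_[p]) : Matrix (Fin 5) (Fin 5) ℚ_[p] :=
  !![c, 0, 0, 0, 0; 0, 1, 0, 0, 0; 0, 0, 1, 0, 0; 0, 0, 0, 1, 0; 0, 0, 0, 0, c⁻¹]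

/-- The Weyl element exchanging coordinates `0 ↔ 1` and `3 ↔ 4`. -/
def gW : Matrix (Fin 5) (Fin 5) ℚ_[p] :=
  !![0, 1, 0, 0, 0; 1, 0, 0, 0, 0; 0, 0, 1, 0, 0; 0, 0, 0, 0, 1; 0, 0, 0, 1, 0]

/-- The Weyl element exchanging coordinates `0 ↔ 4` and `1 ↔ 3`. -/
def gV : Matrix (Fin 5) (Fin 5) ℚ_[p] :=
  !![0, 0, 0, 0, 1; 0, 0, 0, 1, 0; 0, 0, 1, 0, 0; 0, 1, 0, 0, 0; 1, 0, 0, 0, 0]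

lemma J5_eq : J5 p =
    !![0, 0, 0, 0, 1; 0, 0, 0, 1, 0; 0, 0, 1, 0, 0; 0, 1, 0, 0, 0; 1, 0, 0, 0, 0] := by
  ext i j
  fin_cases i <;> fin_cases j <;> simp [J5]

lemma gA_mulVec (t : ℚ_[p]) (y : Fin 5 → ℚ_[p]) :
    (gA t).mulVec y = ![y 0 + t * y 3, y 1 - t * y 4, y 2, y 3, y 4] := by
  ext i
  fin_cases i <;> simp [gA, mulVec, dotProduct, Fin.sum_univ_five, sub_eq_add_neg]

lemma gB_mulVec (t : ℚ_[p]) (y : Fin 5 → ℚ_[p]) :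
    (gB t).mulVec y = ![y 0 + t * y 2 - t ^ 2 / 2 * y 4, y 1, y 2 - t * y 4, y 3, y 4] := by
  ext i
  fin_cases i <;> simp [gB, mulVec, dotProduct, Fin.sum_univ_five, sub_eq_add_neg]

lemma gC_mulVec (t : ℚ_[p]) (y : Fin 5 → ℚ_[p]) :
    (gC t).mulVec y = ![y 0 + t * y 1, y 1, y 2, y 3 - t * y 4, y 4] := by
  ext i
  fin_cases i <;> simp [gC, mulVec, dotProduct, Fin.sum_univ_five, sub_eq_add_neg]

lemma gD_mulVec (c : ℚ_[p]) (y : Fin 5 → ℚ_[p]) :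
    (gD c).mulVec y = ![c * y 0, y 1, y 2, y 3, c⁻¹ * y 4] := by
  ext i
  fin_cases i <;> simp [gD, mulVec, dotProduct, Fin.sum_univ_five]

lemma gW_mulVec (y : Fin 5 → ℚ_[p]) : gW.mulVec y = ![y 1, y 0, y 2, y 4, y 3] := by
  ext i
  fin_cases i <;> simp [gW, mulVec, dotProduct, Fin.sum_univ_five]

lemma gV_mulVec (y : Fin 5 → ℚ_[p]) : gV.mulVec y = ![y 4, y 3, y 2, y 1, y 0] := by
  ext i
  fin_cases i <;> simp [gV, mulVec, dotProduct, Fin.sum_univ_five]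

lemma gA_mem (t : ℚ_[p]) : gA t ∈ SO32 p := by
  refine ⟨?_, ?_⟩
  · rw [J5_eq]
    ext i j
    fin_cases i <;> fin_cases j <;> simp [gA, Matrix.mul_apply, Fin.sum_univ_five]
  · simp [gA, Matrix.det_succ_row_zero, Fin.sum_univ_succ, Fin.succAbove]

lemma gB_mem (t : ℚ_[p]) : gB t ∈ SO32 p := by
  refine ⟨?_, ?_⟩
  · rw [J5_eq]
    ext i j
    fin_cases i <;> fin_cases j <;> simp [gB, Matrix.mul_apply, Fin.sum_univ_five]
    ring
  · simp [gB, Matrix.det_succ_row_zero, Fin.sum_univ_succ, Fin.succAbove]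

lemma gC_mem (t : ℚ_[p]) : gC t ∈ SO32 p := by
  refine ⟨?_, ?_⟩
  · rw [J5_eq]
    ext i j
    fin_cases i <;> fin_cases j <;> simp [gC, Matrix.mul_apply, Fin.sum_univ_five]
  · simp [gC, Matrix.det_succ_row_zero, Fin.sum_univ_succ, Fin.succAbove]

lemma gD_mem {c : ℚ_[p]} (hc : c ≠ 0) : gD c ∈ SO32 p := by
  refine ⟨?_, ?_⟩
  · rw [J5_eq]
    ext i j
    fin_cases i <;> fin_cases j <;> simp [gD, Matrix.mul_apply, Fin.sum_univ_five, hc]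
  · simp [gD, Matrix.det_succ_row_zero, Fin.sum_univ_succ, Fin.succAbove, hc]

lemma gW_mem : (gW : Matrix (Fin 5) (Fin 5) ℚ_[p]) ∈ SO32 p := by
  refine ⟨?_, ?_⟩
  · rw [J5_eq]
    ext i j
    fin_cases i <;> fin_cases j <;> simp [gW, Matrix.mul_apply, Fin.sum_univ_five]
  · simp [gW, Matrix.det_succ_row_zero, Fin.sum_univ_succ, Fin.succAbove]

lemma gV_mem : (gV : Matrix (Fin 5) (Fin 5) ℚ_[p]) ∈ SO32 p := by
  refine ⟨?_, ?_⟩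
  · rw [J5_eq]
    ext i j
    fin_cases i <;> fin_cases j <;> simp [gV, Matrix.mul_apply, Fin.sum_univ_five]
  · simp [gV, Matrix.det_succ_row_zero, Fin.sum_univ_succ, Fin.succAbove]
    norm_num

/-! ### Measures of cells in the chart where the last coordinate dominates -/

/-- The part of the sphere where the last coordinate has norm `p^r` and the coordinates `1`, `2`,
`3` lie in the balls of radii `p^(r-n₁)`, `p^(r-n₂)`, `p^(r-n₃)` around `0`, `e`, `0`. The radii
are encoded without division. The coordinate `0` is determined by the others. -/
def Ecell (r : ℕ) (e : ℚ_[p]) (n₁ n₂ n₃ : ℕ) : Set (Fin 5 → ℚ_[p]) :=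
  {y | y ∈ Ssph p ∧ ‖y 4‖ = (p : ℝ) ^ r ∧ ‖y 1‖ * (p : ℝ) ^ n₁ ≤ (p : ℝ) ^ r ∧
    ‖y 2 - e‖ * (p : ℝ) ^ n₂ ≤ (p : ℝ) ^ r ∧ ‖y 3‖ * (p : ℝ) ^ n₃ ≤ (p : ℝ) ^ r}

lemma meas_Ssph : MeasurableSet (Ssph p) :=
  (isClosed_eq (by fun_prop) (by fun_prop)).measurableSet

lemma meas_Ecell (r : ℕ) (e : ℚ_[p]) (n₁ n₂ n₃ : ℕ) : MeasurableSet (Ecell r e n₁ n₂ n₃) := by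
  exact meas_Ssph.inter <|
    (isClosed_eq (continuous_apply 4).norm continuous_const).measurableSet.inter <|
    (isClosed_le ((continuous_apply 1).norm.mul continuous_const)
      continuous_const).measurableSet.inter <|
    (isClosed_le (((continuous_apply 2).sub continuous_const).norm.mul continuous_const)
      continuous_const).measurableSet.inter
    (isClosed_le ((continuous_apply 3).norm.mul continuous_const) continuous_const).measurableSet

lemma pow_pos' (n : ℕ) : (0 : ℝ) < (p : ℝ) ^ n := pow_pos (zero_lt_one.trans one_lt_pR) n

lemma scaled_norm_sub_le {x z : ℚ_[p]} {c M : ℝ} (hc : 0 ≤ c) (hx : ‖x‖ * c ≤ M) (hz : ‖z‖ * c ≤ M) :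
    ‖x - z‖ * c ≤ M := by
  rcases le_max_iff.1 (norm_sub_le_max_padic x z) with h | h
  · exact (mul_le_mul_of_nonneg_right h hc).trans hx
  · exact (mul_le_mul_of_nonneg_right h hc).trans hz

lemma norm_mul_le_of_unit {t x : ℚ_[p]} (ht : ‖t‖ ≤ 1) : ‖t * x‖ ≤ ‖x‖ := by
  rw [norm_mul]; exact mul_le_of_le_one_left (norm_nonneg _) ht

variable {μ : Measure (Fin 5 → ℚ_[p])}

lemma cellA (hμ : InvMeas μ) (r : ℕ) (e : ℚ_[p]) (n n₂ n₃ : ℕ) :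
    μ.real (Ecell r e 0 n₂ n₃) = (p : ℝ) ^ n * μ.real (Ecell r e n n₂ n₃) := by
  have hM : (0 : ℝ) < (p : ℝ) ^ r := pow_pos' r
  rw [equi hμ n (meas_Ecell r e 0 n₂ n₃) (fun y => y 1) (fun y => y 4) (by fun_prop) (by fun_prop)
    gA gA_mem]
  · congr 2
    ext y
    constructor
    · rintro ⟨⟨h1, h2, h3, h4, h5⟩, h6⟩
      exact ⟨h1, h2, h2 ▸ h6, h4, h5⟩
    · rintro ⟨h1, h2, h3, h4, h5⟩
      refine ⟨⟨h1, h2, ?_, h4, h5⟩, by simpa only [h2] using h3⟩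
      rw [pow_zero, mul_one]
      exact (le_mul_of_one_le_right (norm_nonneg _) (one_le_pow₀ one_lt_pR.le)).trans h3
  · intro t y
    ext i
    fin_cases i <;> simp [gA_mulVec]
  · rintro t ht y ⟨h1, h2, h3, h4, h5⟩
    refine ⟨?_, ?_, ?_, ?_, ?_⟩ <;> simp only [gA_mulVec, Ssph, Set.mem_ofPred_eq] at * <;> simp
    · rw [← h1]; ring
    · exact h2
    · rw [pow_zero, mul_one] at h3
      have := scaled_norm_sub_le zero_le_one (by simpa using h3)
        (z := t * y 4) (by rw [mul_one]; exact (norm_mul_le_of_unit ht).trans h2.le)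
      simpa using this
    · exact h4
    · exact h5
  · intro t ht y hy
    simp [gA_mulVec]
  · intro t ht y hy
    simp [gA_mulVec]
  · rintro y ⟨h1, h2, h3, h4, h5⟩
    refine ⟨by simpa [h2] using h3, fun h => ?_⟩
    simp only [h, norm_zero] at h2
    exact hM.ne h2

lemma cellC (hμ : InvMeas μ) (r : ℕ) (e : ℚ_[p]) (n n₁ n₂ : ℕ) :
    μ.real (Ecell r e n₁ n₂ 0) = (p : ℝ) ^ n * μ.real (Ecell r e n₁ n₂ n) := by
  have hM : (0 : ℝ) < (p : ℝ) ^ r := pow_pos' r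
  rw [equi hμ n (meas_Ecell r e n₁ n₂ 0) (fun y => y 3) (fun y => y 4) (by fun_prop) (by fun_prop)
    gC gC_mem]
  · congr 2
    ext y
    constructor
    · rintro ⟨⟨h1, h2, h3, h4, h5⟩, h6⟩
      exact ⟨h1, h2, h3, h4, h2 ▸ h6⟩
    · rintro ⟨h1, h2, h3, h4, h5⟩
      refine ⟨⟨h1, h2, h3, h4, ?_⟩, by simpa only [h2] using h5⟩
      rw [pow_zero, mul_one]
      exact (le_mul_of_one_le_right (norm_nonneg _) (one_le_pow₀ one_lt_pR.le)).trans h5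
  · intro t y
    ext i
    fin_cases i <;> simp [gC_mulVec]
  · rintro t ht y ⟨h1, h2, h3, h4, h5⟩
    refine ⟨?_, ?_, ?_, ?_, ?_⟩ <;> simp only [gC_mulVec, Ssph, Set.mem_ofPred_eq] at * <;> simp
    · rw [← h1]; ring
    · exact h2
    · exact h3
    · exact h4
    · rw [pow_zero, mul_one] at h5
      have := scaled_norm_sub_le zero_le_one (by simpa using h5)
        (z := t * y 4) (by rw [mul_one]; exact (norm_mul_le_of_unit ht).trans h2.le)
      simpa using this
  · intro t ht y hy
    simp [gC_mulVec]
  · intro t ht y hy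
    simp [gC_mulVec]
  · rintro y ⟨h1, h2, h3, h4, h5⟩
    refine ⟨by simpa [h2] using h5, fun h => ?_⟩
    simp only [h, norm_zero] at h2
    exact hM.ne h2

lemma cellB (hμ : InvMeas μ) (r : ℕ) (e : ℚ_[p]) (n n₁ n₃ : ℕ) :
    μ.real (Ecell r e n₁ 0 n₃) = (p : ℝ) ^ n * μ.real (Ecell r e n₁ n n₃) := by
  have hM : (0 : ℝ) < (p : ℝ) ^ r := pow_pos' r
  rw [equi hμ n (meas_Ecell r e n₁ 0 n₃) (fun y => y 2 - e) (fun y => y 4) (by fun_prop)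
    (by fun_prop) gB gB_mem]
  · congr 2
    ext y
    constructor
    · rintro ⟨⟨h1, h2, h3, h4, h5⟩, h6⟩
      exact ⟨h1, h2, h3, h2 ▸ h6, h5⟩
    · rintro ⟨h1, h2, h3, h4, h5⟩
      refine ⟨⟨h1, h2, h3, ?_, h5⟩, by simpa only [h2] using h4⟩
      rw [pow_zero, mul_one]
      exact (le_mul_of_one_le_right (norm_nonneg _) (one_le_pow₀ one_lt_pR.le)).trans h4
  · intro t y
    ext i
    fin_cases i <;> simp [gB_mulVec]
    ring
  · rintro t ht y ⟨h1, h2, h3, h4, h5⟩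
    refine ⟨?_, ?_, ?_, ?_, ?_⟩ <;> simp only [gB_mulVec, Ssph, Set.mem_ofPred_eq] at * <;> simp
    · rw [← h1]; ring
    · exact h2
    · exact h3
    · rw [pow_zero, mul_one] at h4
      have := scaled_norm_sub_le zero_le_one (by simpa using h4)
        (z := t * y 4) (by rw [mul_one]; exact (norm_mul_le_of_unit ht).trans h2.le)
      rw [show y 2 - t * y 4 - e = y 2 - e - t * y 4 by ring]
      simpa using this
    · exact h5
  · intro t ht y hy
    simp [gB_mulVec]
  · intro t ht y hy
    have : y 2 - t * y 4 - e - (y 2 - e - t * y 4) = 0 := by ring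
    simp [gB_mulVec, this]
  · rintro y ⟨h1, h2, h3, h4, h5⟩
    refine ⟨by simpa [h2] using h4, fun h => ?_⟩
    simp only [h, norm_zero] at h2
    exact hM.ne h2

/-- The cell with parameters `n₁, n₂, n₃` has relative measure `p^-(n₁+n₂+n₃)` in its chart. -/
lemma cell (hμ : InvMeas μ) (r : ℕ) (e : ℚ_[p]) (n₁ n₂ n₃ : ℕ) :
    μ.real (Ecell r e 0 0 0) = (p : ℝ) ^ (n₁ + n₂ + n₃) * μ.real (Ecell r e n₁ n₂ n₃) := by
  rw [cellA hμ r e n₁, cellB hμ r e n₂, cellC hμ r e n₃]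
  ring

/-- A torus element carries the `r = 0` chart onto a cell of the level `r` chart. -/
lemma chart_scale (hμ : InvMeas μ) (r : ℕ) :
    μ.real (Ecell r 0 0 0 0) = (p : ℝ) ^ (3 * r) * μ.real (Ecell 0 (0 : ℚ_[p]) 0 0 0) := by
  have hp0 : (p : ℚ_[p]) ≠ 0 := by exact_mod_cast (Fact.out : p.Prime).ne_zero
  have hM : (0 : ℝ) < (p : ℝ) ^ r := pow_pos' r
  rw [cell hμ r 0 r r r, ← hμ.preimage (gD_mem (pow_ne_zero r hp0)) (meas_Ecell r 0 r r r)]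
  congr 1
  · congr 1; ring
  · congr 1
    ext y
    simp only [Set.mem_preimage, Ecell, Set.mem_ofPred_eq, gD_mulVec, Ssph]
    simp [hM]
    field_simp

/-! ### Decomposition of the orbits -/

/-- The centre of the ball for the coordinate `2` is irrelevant when its radius is maximal. -/
lemma Ecell_eq_of_le (r : ℕ) {e : ℚ_[p]} (he : ‖e‖ ≤ 1) (n₁ n₃ : ℕ) :
    Ecell r e n₁ 0 n₃ = Ecell r 0 n₁ 0 n₃ := by
  have h1 : ‖e‖ * 1 ≤ (p : ℝ) ^ r := by
    rw [mul_one]; exact he.trans (one_le_pow₀ one_lt_pR.le)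
  ext y
  simp only [Ecell, Set.mem_ofPred_eq, pow_zero, sub_zero]
  refine and_congr_right fun _ => and_congr_right fun _ => and_congr_right fun _ =>
    and_congr_left fun _ => ⟨fun h => ?_, fun h => scaled_norm_sub_le zero_le_one h h1⟩
  have := scaled_norm_sub_le zero_le_one h (z := -e) (by rwa [norm_neg])
  simpa using this

/-- The norm takes no value strictly between consecutive powers of `p`. -/
lemma norm_mul_pow_one_le_iff (x : ℚ_[p]) (r : ℕ) :
    ‖x‖ * (p : ℝ) ^ 1 ≤ (p : ℝ) ^ r ↔ ‖x‖ < (p : ℝ) ^ r := by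
  have hp := zero_lt_one.trans (one_lt_pR (p := p))
  have h := Padic.norm_le_pow_iff_norm_lt_pow_add_one x ((r : ℤ) - 1)
  rw [sub_add_cancel, zpow_sub₀ hp.ne', zpow_natCast, zpow_one, le_div_iff₀ hp] at h
  rw [pow_one]
  exact h

lemma norm_add_lt_iff {x z : ℚ_[p]} {c : ℝ} (hz : ‖z‖ < c) : ‖x + z‖ < c ↔ ‖x‖ < c := by
  constructor <;> intro h
  · have := norm_sub_le_max_padic (x + z) z
    rw [add_sub_cancel_right] at this
    exact this.trans_lt (max_lt h hz)
  · exact (IsUltrametricDist.norm_add_le_max x z).trans_lt (max_lt h hz)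

lemma norm_coord_zero (hp : p ≠ 2) {y : Fin 5 → ℚ_[p]} (hy : y ∈ Ssph p) :
    ‖y 0‖ * ‖y 4‖ = ‖1 - y 2 ^ 2 + -(2 * y 1 * y 3)‖ := by
  have h : 2 * y 0 * y 4 + 2 * y 1 * y 3 + y 2 ^ 2 = 1 := hy
  have e : 1 - y 2 ^ 2 + -(2 * y 1 * y 3) = 2 * y 0 * y 4 := by rw [← h]; ring
  rw [e, norm_mul, norm_mul, two_norm hp, one_mul]

lemma norm_two_mul_mul (hp : p ≠ 2) (x z : ℚ_[p]) : ‖-(2 * x * z)‖ = ‖x‖ * ‖z‖ := by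
  rw [norm_neg, norm_mul, norm_mul, two_norm hp, one_mul]

lemma coord_zero_le (hp : p ≠ 2) {r : ℕ} {y : Fin 5 → ℚ_[p]} (hy : y ∈ Ssph p)
    (h4 : ‖y 4‖ = (p : ℝ) ^ r) (h1 : ‖y 1‖ ≤ (p : ℝ) ^ r) (h2 : ‖y 2‖ ≤ (p : ℝ) ^ r)
    (h3 : ‖y 3‖ ≤ (p : ℝ) ^ r) : ‖y 0‖ ≤ (p : ℝ) ^ r := by
  have hM : (0 : ℝ) < (p : ℝ) ^ r := pow_pos' r
  have hM1 : (1 : ℝ) ≤ (p : ℝ) ^ r := one_le_pow₀ one_lt_pR.le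
  have h := norm_coord_zero hp hy
  rw [h4] at h
  refine le_of_mul_le_mul_right ?_ hM
  rw [h]
  refine (IsUltrametricDist.norm_add_le_max _ _).trans (max_le ?_ ?_)
  · refine (norm_sub_le_max_padic _ _).trans (max_le ?_ ?_)
    · rw [norm_one]; nlinarith
    · rw [norm_pow, sq]
      exact mul_le_mul h2 h2 (norm_nonneg _) hM.le
  · rw [norm_two_mul_mul hp]
    exact mul_le_mul h1 h3 (norm_nonneg _) hM.le

/-- In the chart of the last coordinate, once the coordinate `1` is small, the size of the
coordinate `0` is governed by the coordinate `2` alone. -/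
lemma coord_zero_lt_iff (hp : p ≠ 2) {r : ℕ} {y : Fin 5 → ℚ_[p]} (hy : y ∈ Ssph p)
    (h4 : ‖y 4‖ = (p : ℝ) ^ r) (h1 : ‖y 1‖ < (p : ℝ) ^ r) (h3 : ‖y 3‖ ≤ (p : ℝ) ^ r) :
    ‖y 0‖ < (p : ℝ) ^ r ↔ ‖1 - y 2 ^ 2‖ < (p : ℝ) ^ r * (p : ℝ) ^ r := by
  have hM : (0 : ℝ) < (p : ℝ) ^ r := pow_pos' r
  have h := norm_coord_zero hp hy
  rw [h4] at h
  rw [← mul_lt_mul_iff_left₀ hM, h, norm_add_lt_iff]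
  rw [norm_two_mul_mul hp]
  exact mul_lt_mul_of_lt_of_le_of_nonneg_of_pos h1 h3 (norm_nonneg _) hM

lemma one_lt_level {r : ℕ} (hr : 1 ≤ r) : (1 : ℝ) < (p : ℝ) ^ r :=
  one_lt_pow₀ one_lt_pR (by omega)

lemma sq_lt_iff_of_pos {r : ℕ} (hr : 1 ≤ r) (x : ℚ_[p]) :
    ‖1 - x ^ 2‖ < (p : ℝ) ^ r * (p : ℝ) ^ r ↔ ‖x‖ < (p : ℝ) ^ r := by
  have hM1 : (1 : ℝ) < (p : ℝ) ^ r := one_lt_level hr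
  have h1 : ‖(1 : ℚ_[p])‖ < (p : ℝ) ^ r * (p : ℝ) ^ r := by rw [norm_one]; nlinarith
  rw [show 1 - x ^ 2 = -(x ^ 2) + 1 by ring, norm_add_lt_iff h1, norm_neg, norm_pow, ← sq]
  exact pow_lt_pow_iff_left₀ (norm_nonneg _) (by linarith) two_ne_zero

lemma sq_lt_iff_zero (x : ℚ_[p]) (hx : ‖x‖ ≤ 1) :
    ‖1 - x ^ 2‖ < 1 ↔ ‖x - 1‖ < 1 ∨ ‖x - -1‖ < 1 := by
  have e : ‖1 - x ^ 2‖ = ‖x - 1‖ * ‖x - -1‖ := by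
    rw [← norm_mul, ← norm_neg]; congr 1; ring
  have h1 : ‖x - 1‖ ≤ 1 := (norm_sub_le_max_padic _ _).trans (max_le hx (by simp))
  have h2 : ‖x - -1‖ ≤ 1 := (norm_sub_le_max_padic _ _).trans (max_le hx (by simp))
  rw [e]
  constructor
  · intro h
    by_contra! hc
    nlinarith [hc.1, hc.2]
  · rintro (h | h)
    · exact (mul_le_of_le_one_right (norm_nonneg _) h2).trans_lt h
    · exact (mul_le_of_le_one_left (norm_nonneg _) h1).trans_lt h

lemma mem_Orb_iff (r : ℕ) (y : Fin 5 → ℚ_[p]) : y ∈ Orb p r ↔ y ∈ Ssph p ∧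
    (‖y 0‖ ≤ (p : ℝ) ^ r ∧ ‖y 1‖ ≤ (p : ℝ) ^ r ∧ ‖y 2‖ ≤ (p : ℝ) ^ r ∧ ‖y 3‖ ≤ (p : ℝ) ^ r ∧
      ‖y 4‖ ≤ (p : ℝ) ^ r) ∧
    (‖y 0‖ = (p : ℝ) ^ r ∨ ‖y 1‖ = (p : ℝ) ^ r ∨ ‖y 2‖ = (p : ℝ) ^ r ∨ ‖y 3‖ = (p : ℝ) ^ r ∨
      ‖y 4‖ = (p : ℝ) ^ r) := by
  simp [Orb, Fin.forall_fin_succ, Fin.exists_fin_succ]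
  tauto

/-- The points of the orbit whose coordinates `3` and `4` are not of maximal norm. -/
def Zset (r : ℕ) : Set (Fin 5 → ℚ_[p]) :=
  {y | y ∈ Orb p r ∧ ‖y 3‖ < (p : ℝ) ^ r ∧ ‖y 4‖ < (p : ℝ) ^ r}

lemma meas_Orb (r : ℕ) : MeasurableSet (Orb p r) := by
  have h : Orb p r = Ssph p ∩ ((⋂ i, {y | ‖y i‖ ≤ (p : ℝ) ^ r}) ∩
      ⋃ i, {y | ‖y i‖ = (p : ℝ) ^ r}) := by
    ext y; simp [Orb]; tauto
  rw [h]
  exact meas_Ssph.inter ((MeasurableSet.iInter fun i =>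
    (isClosed_le (continuous_apply i).norm continuous_const).measurableSet).inter
    (MeasurableSet.iUnion fun i =>
    (isClosed_eq (continuous_apply i).norm continuous_const).measurableSet))

lemma meas_lt (i : Fin 5) (c : ℝ) : MeasurableSet {y : Fin 5 → ℚ_[p] | ‖y i‖ < c} :=
  (isOpen_lt (continuous_apply i).norm continuous_const).measurableSet

lemma meas_Zset (r : ℕ) : MeasurableSet (Zset (p := p) r) :=
  (meas_Orb r).inter ((meas_lt 3 _).inter (meas_lt 4 _))

lemma mem_Ecell_base (r n₁ n₂ n₃ : ℕ) (y : Fin 5 → ℚ_[p]) : y ∈ Ecell r 0 n₁ n₂ n₃ ↔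
    y ∈ Ssph p ∧ ‖y 4‖ = (p : ℝ) ^ r ∧ ‖y 1‖ * (p : ℝ) ^ n₁ ≤ (p : ℝ) ^ r ∧
    ‖y 2‖ * (p : ℝ) ^ n₂ ≤ (p : ℝ) ^ r ∧ ‖y 3‖ * (p : ℝ) ^ n₃ ≤ (p : ℝ) ^ r := by
  simp [Ecell]
  tauto

lemma gW_Ssph (y : Fin 5 → ℚ_[p]) : ![y 1, y 0, y 2, y 4, y 3] ∈ Ssph p ↔ y ∈ Ssph p := by
  simp only [Ssph, Set.mem_ofPred_eq]
  simp
  rw [show 2 * y 1 * y 3 + 2 * y 0 * y 4 = 2 * y 0 * y 4 + 2 * y 1 * y 3 by ring]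

lemma gV_Ssph (y : Fin 5 → ℚ_[p]) : ![y 4, y 3, y 2, y 1, y 0] ∈ Ssph p ↔ y ∈ Ssph p := by
  simp only [Ssph, Set.mem_ofPred_eq]
  simp
  rw [show 2 * y 4 * y 0 + 2 * y 3 * y 1 = 2 * y 0 * y 4 + 2 * y 1 * y 3 by ring]

lemma mem_gW_Ecell (r n₁ n₂ n₃ : ℕ) (y : Fin 5 → ℚ_[p]) :
    y ∈ (fun v => gW.mulVec v) ⁻¹' Ecell r 0 n₁ n₂ n₃ ↔
    y ∈ Ssph p ∧ ‖y 3‖ = (p : ℝ) ^ r ∧ ‖y 0‖ * (p : ℝ) ^ n₁ ≤ (p : ℝ) ^ r ∧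
    ‖y 2‖ * (p : ℝ) ^ n₂ ≤ (p : ℝ) ^ r ∧ ‖y 4‖ * (p : ℝ) ^ n₃ ≤ (p : ℝ) ^ r := by
  rw [Set.mem_preimage, gW_mulVec, mem_Ecell_base, gW_Ssph]
  simp

lemma mem_gV_Ecell (r : ℕ) (e : ℚ_[p]) (n₁ n₂ n₃ : ℕ) (y : Fin 5 → ℚ_[p]) :
    y ∈ (fun v => gV.mulVec v) ⁻¹' Ecell r e n₁ n₂ n₃ ↔
    y ∈ Ssph p ∧ ‖y 0‖ = (p : ℝ) ^ r ∧ ‖y 3‖ * (p : ℝ) ^ n₁ ≤ (p : ℝ) ^ r ∧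
    ‖y 2 - e‖ * (p : ℝ) ^ n₂ ≤ (p : ℝ) ^ r ∧ ‖y 1‖ * (p : ℝ) ^ n₃ ≤ (p : ℝ) ^ r := by
  rw [Set.mem_preimage, gV_mulVec, Ecell, Set.mem_ofPred_eq, gV_Ssph]
  simp

lemma mem_gVW_Ecell (r n₁ n₂ n₃ : ℕ) (y : Fin 5 → ℚ_[p]) :
    y ∈ (fun v => gW.mulVec v) ⁻¹' ((fun v => gV.mulVec v) ⁻¹' Ecell r 0 n₁ n₂ n₃) ↔
    y ∈ Ssph p ∧ ‖y 1‖ = (p : ℝ) ^ r ∧ ‖y 4‖ * (p : ℝ) ^ n₁ ≤ (p : ℝ) ^ r ∧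
    ‖y 2‖ * (p : ℝ) ^ n₂ ≤ (p : ℝ) ^ r ∧ ‖y 0‖ * (p : ℝ) ^ n₃ ≤ (p : ℝ) ^ r := by
  rw [Set.mem_preimage, mem_gV_Ecell, gW_mulVec, gW_Ssph]
  simp

lemma Orb_eq (hp : p ≠ 2) (r : ℕ) : Orb p r = (Ecell r 0 0 0 0 ∪
    (fun v => gW.mulVec v) ⁻¹' Ecell r 0 0 0 1) ∪ Zset r := by
  ext y
  rw [Set.mem_union, Set.mem_union, mem_gW_Ecell, mem_Ecell_base, norm_mul_pow_one_le_iff]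
  simp only [pow_zero, mul_one, Zset, Set.mem_ofPred_eq]
  constructor
  · intro h
    have h' := (mem_Orb_iff r y).1 h
    obtain ⟨hs, ⟨h0, h1, h2, h3, h4⟩, -⟩ := h'
    rcases h4.eq_or_lt with h4' | h4'
    · exact Or.inl (Or.inl ⟨hs, h4', h1, h2, h3⟩)
    rcases h3.eq_or_lt with h3' | h3'
    · exact Or.inl (Or.inr ⟨hs, h3', h0, h2, h4'⟩)
    · exact Or.inr ⟨h, h3', h4'⟩
  · rintro ((⟨hs, h4, h1, h2, h3⟩ | ⟨hs, h3, h0, h2, h4⟩) | ⟨h, -⟩)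
    · exact (mem_Orb_iff r y).2 ⟨hs, ⟨coord_zero_le hp hs h4 h1 h2 h3, h1, h2, h3, h4.le⟩, by tauto⟩
    · have h1 := coord_zero_le hp (r := r) ((gW_Ssph y).2 hs) (by simpa using h3) (by simpa using h0)
        (by simpa using h2) (by simpa using h4.le)
      exact (mem_Orb_iff r y).2 ⟨hs, ⟨h0, by simpa using h1, h2, h3.le, h4.le⟩, by tauto⟩
    · exact h

/-- The chart measure and the measure of `Zset` determine the measure of the orbit. -/
lemma Orb_measure (hp : p ≠ 2) (hμ : InvMeas μ) (r : ℕ) (hfin : μ (Orb p r) < ⊤) :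
    μ.real (Orb p r) = μ.real (Ecell r 0 0 0 0) * (1 + (p : ℝ)⁻¹) + μ.real (Zset (p := p) r) := by
  have hpR : (p : ℝ) ≠ 0 := (zero_lt_one.trans one_lt_pR).ne'
  have hO := Orb_eq hp r
  have f : ∀ s ⊆ Orb p r, μ s ≠ ⊤ := fun s hs => ((measure_mono hs).trans_lt hfin).ne
  have f1 : Ecell r 0 0 0 0 ∪ (fun v => gW.mulVec v) ⁻¹' Ecell r 0 0 0 1 ⊆ Orb p r := by
    rw [hO]; exact Set.subset_union_left
  have d1 : Disjoint (Ecell r 0 0 0 0 ∪ (fun v => gW.mulVec v) ⁻¹' Ecell r 0 0 0 1)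
      (Zset (p := p) r) := by
    refine Set.disjoint_left.2 fun y hy hz => ?_
    rw [Set.mem_union, mem_gW_Ecell, mem_Ecell_base] at hy
    rcases hy with hy | hy
    · exact hz.2.2.ne hy.2.1
    · exact hz.2.1.ne hy.2.1
  have d2 : Disjoint (Ecell r 0 0 0 0)
      ((fun v => gW.mulVec v) ⁻¹' Ecell (p := p) r 0 0 0 1) := by
    refine Set.disjoint_left.2 fun y hy hz => ?_
    rw [mem_gW_Ecell, norm_mul_pow_one_le_iff] at hz
    exact hz.2.2.2.2.ne hy.2.1
  rw [hO, measureReal_union d1 (meas_Zset r) (f _ f1) (f _ fun y hy => hy.1),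
    measureReal_union d2 (meas_mulVec _ (meas_Ecell ..)) (f _ (Set.subset_union_left.trans f1))
    (f _ (Set.subset_union_right.trans f1)), hμ.preimage gW_mem (meas_Ecell ..),
    cell hμ r 0 0 0 1]
  simp
  field_simp

lemma Zset_split (r : ℕ) (hfin : μ (Orb p r) < ⊤) : μ.real (Zset (p := p) r) =
    μ.real {y : Fin 5 → ℚ_[p] | y ∈ Zset r ∧ ‖y 0‖ = (p : ℝ) ^ r} +
    μ.real {y : Fin 5 → ℚ_[p] | y ∈ Zset r ∧ ‖y 0‖ < (p : ℝ) ^ r} := by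
  have f : ∀ s ⊆ Orb p r, μ s ≠ ⊤ := fun s hs => ((measure_mono hs).trans_lt hfin).ne
  have hm : MeasurableSet {y : Fin 5 → ℚ_[p] | y ∈ Zset r ∧ ‖y 0‖ < (p : ℝ) ^ r} :=
    (meas_Zset r).inter (meas_lt 0 _)
  rw [← measureReal_union _ hm (f _ fun y hy => hy.1.1)
    (f _ fun y hy => hy.1.1)]
  · congr 1
    ext y
    constructor
    · intro h
      have h0 := ((mem_Orb_iff r y).1 h.1).2.1.1
      rcases h0.eq_or_lt with h' | h'
      · exact Or.inl ⟨h, h'⟩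
      · exact Or.inr ⟨h, h'⟩
    · rintro (h | h) <;> exact h.1
  · exact Set.disjoint_left.2 fun y h1 h2 => h2.2.ne h1.2

/-- For `r ≥ 1`, a point with `y₀` maximal and `y₃, y₄` small automatically has `y₂` small. -/
lemma Z0_pos (hp : p ≠ 2) {r : ℕ} (hr : 1 ≤ r) :
    {y : Fin 5 → ℚ_[p] | y ∈ Zset r ∧ ‖y 0‖ = (p : ℝ) ^ r} =
    (fun v => gV.mulVec v) ⁻¹' Ecell r 0 1 1 0 := by
  ext y
  rw [mem_gV_Ecell, norm_mul_pow_one_le_iff, norm_mul_pow_one_le_iff]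
  simp only [Zset, Set.mem_ofPred_eq, sub_zero, pow_zero, mul_one]
  rw [mem_Orb_iff]
  have key := coord_zero_lt_iff hp (r := r) (y := ![y 4, y 3, y 2, y 1, y 0])
  rw [gV_Ssph] at key
  simp only [Matrix.cons_val, sq_lt_iff_of_pos hr] at key
  constructor
  · rintro ⟨⟨⟨hs, ⟨h0, h1, h2, h3, h4⟩, -⟩, h3', h4'⟩, h0'⟩
    exact ⟨hs, h0', h3', (key hs h0' h3' h1).1 h4', h1⟩
  · rintro ⟨hs, h0, h3, h2, h1⟩
    have h4 := (key hs h0 h3 h1).2 h2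
    exact ⟨⟨⟨hs, ⟨h0.le, h1, h2.le, h3.le, h4.le⟩, Or.inl h0⟩, h3, h4⟩, h0⟩

/-- For `r ≥ 1`, a point with `y₀, y₃, y₄` small has `y₂` small, hence `y₁` maximal. -/
lemma Z1_pos (hp : p ≠ 2) {r : ℕ} (hr : 1 ≤ r) :
    {y : Fin 5 → ℚ_[p] | y ∈ Zset r ∧ ‖y 0‖ < (p : ℝ) ^ r} =
    (fun v => gW.mulVec v) ⁻¹' ((fun v => gV.mulVec v) ⁻¹' Ecell r 0 1 1 1) := by
  have hM : (0 : ℝ) < (p : ℝ) ^ r := pow_pos' r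
  ext y
  rw [mem_gVW_Ecell, norm_mul_pow_one_le_iff, norm_mul_pow_one_le_iff, norm_mul_pow_one_le_iff]
  simp only [Zset, Set.mem_ofPred_eq]
  rw [mem_Orb_iff]
  constructor
  · rintro ⟨⟨⟨hs, ⟨h0, h1, h2, h3, h4⟩, hex⟩, h3', h4'⟩, h0'⟩
    have h2' : ‖y 2‖ < (p : ℝ) ^ r := by
      have e := norm_coord_zero hp hs
      have lt04 : ‖y 0‖ * ‖y 4‖ < (p : ℝ) ^ r * (p : ℝ) ^ r :=
        mul_lt_mul'' h0' h4' (norm_nonneg _) (norm_nonneg _)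
      rw [e, norm_add_lt_iff, sq_lt_iff_of_pos hr] at lt04
      · exact lt04
      · rw [norm_two_mul_mul hp]
        exact mul_lt_mul_of_le_of_lt_of_nonneg_of_pos h1 h3' (norm_nonneg _) hM
    have h1' : ‖y 1‖ = (p : ℝ) ^ r := by
      rcases hex with h | h | h | h | h
      · exact absurd h h0'.ne
      · exact h
      · exact absurd h h2'.ne
      · exact absurd h h3'.ne
      · exact absurd h h4'.ne
    exact ⟨hs, h1', h4', h2', h0'⟩
  · rintro ⟨hs, h1, h4, h2, h0⟩
    have key := coord_zero_lt_iff hp (r := r) (y := ![y 3, y 4, y 2, y 0, y 1])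
      (by simpa using (gV_Ssph _).2 ((gW_Ssph y).2 hs))
    simp only [Matrix.cons_val, sq_lt_iff_of_pos hr] at key
    have h3 := (key h1 h4 h0.le).2 h2
    exact ⟨⟨⟨hs, ⟨h0.le, h1.le, h2.le, h3.le, h4.le⟩, Or.inr (Or.inl h1)⟩, h3, h4⟩, h0⟩

/-- For `r = 0`, a point with `y₀` a unit and `y₃, y₄` small has `y₂` congruent to `1` or `-1`. -/
lemma Z0_zero (hp : p ≠ 2) :
    {y : Fin 5 → ℚ_[p] | y ∈ Zset 0 ∧ ‖y 0‖ = (p : ℝ) ^ 0} =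
    (fun v => gV.mulVec v) ⁻¹' Ecell 0 1 1 1 0 ∪ (fun v => gV.mulVec v) ⁻¹' Ecell 0 (-1) 1 1 0 := by
  ext y
  rw [Set.mem_union, mem_gV_Ecell, mem_gV_Ecell]
  simp only [norm_mul_pow_one_le_iff]
  simp only [Zset, Set.mem_ofPred_eq]
  rw [mem_Orb_iff]
  have key := coord_zero_lt_iff hp (r := 0) (y := ![y 4, y 3, y 2, y 1, y 0])
  rw [gV_Ssph] at key
  simp only [Matrix.cons_val, pow_zero, mul_one] at key ⊢
  constructor
  · rintro ⟨⟨⟨hs, ⟨h0, h1, h2, h3, h4⟩, -⟩, h3', h4'⟩, h0'⟩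
    have := (sq_lt_iff_zero _ h2).1 ((key hs h0' h3' h1).1 h4')
    tauto
  · have aux : ∀ e : ℚ_[p], ‖e‖ = 1 → ‖y 2 - e‖ < 1 → ‖y 2‖ ≤ 1 := by
      intro e he h
      have := IsUltrametricDist.norm_add_le_max (y 2 - e) e
      rw [sub_add_cancel] at this
      exact this.trans (max_le h.le he.le)
    intro h
    have hs : y ∈ Ssph p := by tauto
    have h0 : ‖y 0‖ = 1 := by tauto
    have h3 : ‖y 3‖ < 1 := by tauto
    have h1 : ‖y 1‖ ≤ 1 := by tauto
    have h2' : ‖y 2 - 1‖ < 1 ∨ ‖y 2 - -1‖ < 1 := by tauto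
    have h2 : ‖y 2‖ ≤ 1 := h2'.elim (aux 1 (by simp)) (aux (-1) (by simp))
    have h4 := (key hs h0 h3 h1).2 ((sq_lt_iff_zero _ h2).2 h2')
    exact ⟨⟨⟨hs, ⟨h0.le, h1, h2, h3.le, h4.le⟩, Or.inl h0⟩, h3, h4⟩, h0⟩

/-- On `Zset 0` the coordinate `2` is a unit, so the classes of the coordinate `0` modulo `p` are
equidistributed. -/
lemma Z1_zero (hp : p ≠ 2) (hμ : InvMeas μ) : μ.real (Zset (p := p) 0) =
    (p : ℝ) * μ.real {y : Fin 5 → ℚ_[p] | y ∈ Zset 0 ∧ ‖y 0‖ < (p : ℝ) ^ 0} := by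
  -- if `y₂` were not a unit, the equation of the sphere would give `‖1‖ < 1`
  have hunit : ∀ y ∈ Zset (p := p) 0, ‖y 2‖ = 1 := by
    rintro y ⟨hO, h3, h4⟩
    obtain ⟨hs, ⟨h0, h1, h2, -, -⟩, -⟩ := (mem_Orb_iff 0 y).1 hO
    rw [pow_zero] at *
    refine le_antisymm h2 (not_lt.1 fun hlt => ?_)
    have e := norm_coord_zero hp hs
    have h04 : ‖y 0‖ * ‖y 4‖ < 1 := by nlinarith [norm_nonneg (y 4), norm_nonneg (y 0)]
    rw [e, norm_add_lt_iff, show 1 - y 2 ^ 2 = 1 + -(y 2 ^ 2) by ring, norm_add_lt_iff] at h04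
    · simp at h04
    · rw [norm_neg, norm_pow]; nlinarith [norm_nonneg (y 2)]
    · rw [norm_two_mul_mul hp]; nlinarith [norm_nonneg (y 1), norm_nonneg (y 3)]
  have hhalf : ∀ t : ℚ_[p], ‖t‖ ≤ 1 → ‖t ^ 2 / 2‖ ≤ 1 := by
    intro t ht
    rw [norm_div, two_norm hp, div_one, norm_pow]
    exact pow_le_one₀ (norm_nonneg _) ht
  have h := equi hμ 1 (meas_Zset (p := p) 0) (fun y => y 0) (fun y => y 2) (by fun_prop)
    (by fun_prop) (fun t => gB (-t)) (fun t => gB_mem _) ?_ ?_ ?_ ?_ ?_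
  · rw [h, pow_one]
    congr 2
    ext y
    refine and_congr_right fun hy => ?_
    rw [hunit y hy, ← norm_mul_pow_one_le_iff, pow_one, pow_zero]
  · intro t y
    ext i
    fin_cases i <;> simp [gB_mulVec]
    ring
  · intro t ht y hy
    have h2u := hunit y hy
    obtain ⟨hO, h3, h4⟩ := hy
    obtain ⟨hs, ⟨h0, h1, h2, -, -⟩, -⟩ := (mem_Orb_iff 0 y).1 hO
    rw [pow_zero] at *
    have ht' := norm_mul_le_of_unit (x := y 4) ht
    have n2 : ‖y 2 + t * y 4‖ = 1 := by
      rw [IsUltrametricDist.norm_add_eq_max_of_norm_ne_norm, h2u, max_eq_left]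
      · linarith
      · rw [h2u]; exact (ht'.trans_lt h4).ne'
    have n0 : ‖y 0 - t * y 2 - t ^ 2 / 2 * y 4‖ ≤ 1 := by
      refine (norm_sub_le_max_padic _ _).trans (max_le
        ((norm_sub_le_max_padic _ _).trans (max_le h0 ?_)) ?_)
      · exact (norm_mul_le_of_unit ht).trans h2
      · exact (norm_mul_le_of_unit (hhalf t ht)).trans h4.le
    refine ⟨(mem_Orb_iff 0 _).2 ⟨?_, ?_, ?_⟩, ?_, ?_⟩ <;> rw [gB_mulVec]
    · have hs' : 2 * y 0 * y 4 + 2 * y 1 * y 3 + y 2 ^ 2 = 1 := hs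
      simp only [Ssph, Set.mem_ofPred_eq]
      simp
      rw [← hs']; ring
    · simp only [pow_zero]
      simp only [neg_mul, even_two, Even.neg_pow, sub_neg_eq_add, Matrix.cons_val]
      rw [← sub_eq_add_neg]
      exact ⟨n0, h1, n2.le, h3.le, h4.le⟩
    · right; right; left
      simpa using n2
    · simpa using h3
    · simpa using h4
  · intro t ht y hy
    have h2u := hunit y hy
    obtain ⟨hO, h3, h4⟩ := hy
    rw [pow_zero] at *
    have ht' := norm_mul_le_of_unit (x := y 4) ht
    rw [gB_mulVec]
    simp only [neg_mul, sub_neg_eq_add, Matrix.cons_val]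
    rw [IsUltrametricDist.norm_add_eq_max_of_norm_ne_norm, h2u, max_eq_left]
    · linarith
    · rw [h2u]; exact (ht'.trans_lt h4).ne'
  · intro t ht y hy
    have h2u := hunit y hy
    obtain ⟨hO, h3, h4⟩ := hy
    rw [gB_mulVec]
    simp only [Matrix.cons_val]
    rw [h2u,
      show y 0 + -t * y 2 - (-t) ^ 2 / 2 * y 4 - (y 0 - t * y 2) = -(t ^ 2 / 2 * y 4) by ring,
      norm_neg, ← pow_zero (p : ℝ), norm_mul_pow_one_le_iff]
    exact (norm_mul_le_of_unit (hhalf t ht)).trans_lt h4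
  · intro y hy
    refine ⟨?_, fun h0 => ?_⟩
    · rw [hunit y hy]
      simpa using ((mem_Orb_iff 0 y).1 hy.1).2.1.1
    · have := hunit y hy
      simp [h0] at this

lemma Orb_real_pos (hp : p ≠ 2) (hμ : InvMeas μ) {r : ℕ} (hr : 1 ≤ r) (hfin : μ (Orb p r) < ⊤) :
    μ.real (Orb p r) = μ.real (Ecell r (0 : ℚ_[p]) 0 0 0) *
      (1 + (p : ℝ)⁻¹ + ((p : ℝ) ^ 2)⁻¹ + ((p : ℝ) ^ 3)⁻¹) := by
  have hpR : (p : ℝ) ≠ 0 := (zero_lt_one.trans one_lt_pR).ne'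
  have c2 := cell hμ r 0 1 1 0
  have c3 := cell hμ r 0 1 1 1
  rw [Orb_measure hp hμ r hfin, Zset_split r hfin, Z0_pos hp hr, Z1_pos hp hr,
    hμ.preimage gW_mem (meas_mulVec _ (meas_Ecell ..)), hμ.preimage gV_mem (meas_Ecell ..),
    hμ.preimage gV_mem (meas_Ecell ..)]
  have e2 : μ.real (Ecell r (0 : ℚ_[p]) 1 1 0) = μ.real (Ecell r (0 : ℚ_[p]) 0 0 0) / p ^ 2 := by
    rw [c2]; field_simp
  have e3 : μ.real (Ecell r (0 : ℚ_[p]) 1 1 1) = μ.real (Ecell r (0 : ℚ_[p]) 0 0 0) / p ^ 3 := by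
    rw [c3]; field_simp
  rw [e2, e3]
  ring

lemma Orb_real_zero (hp : p ≠ 2) (hμ : InvMeas μ) (hfin : μ (Orb p 0) < ⊤) :
    μ.real (Orb p 0) * ((p : ℝ) * (p - 1)) =
      μ.real (Ecell 0 (0 : ℚ_[p]) 0 0 0) * ((p : ℝ) ^ 2 + 1) := by
  have hpR : (p : ℝ) ≠ 0 := (zero_lt_one.trans one_lt_pR).ne'
  have f : ∀ s ⊆ Orb p 0, μ s ≠ ⊤ := fun s hs => ((measure_mono hs).trans_lt hfin).ne
  have c1 := cell hμ 0 1 1 1 0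
  have c2 := cell hμ 0 (-1) 1 1 0
  rw [Ecell_eq_of_le 0 (by simp)] at c1 c2
  have hsub : ∀ y ∈ {y : Fin 5 → ℚ_[p] | y ∈ Zset 0 ∧ ‖y 0‖ = (p : ℝ) ^ 0}, y ∈ Orb p 0 :=
    fun y hy => hy.1.1
  rw [Z0_zero hp] at hsub
  have hZ := Zset_split (μ := μ) 0 hfin
  have hd : Disjoint ((fun v => gV.mulVec v) ⁻¹' Ecell (p := p) 0 1 1 1 0)
      ((fun v => gV.mulVec v) ⁻¹' Ecell 0 (-1) 1 1 0) := by
    refine Set.disjoint_left.2 fun y h1 h2 => ?_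
    rw [mem_gV_Ecell, norm_mul_pow_one_le_iff, norm_mul_pow_one_le_iff] at h1 h2
    have := norm_sub_le_max_padic (y 2 - -1) (y 2 - 1)
    rw [show y 2 - -1 - (y 2 - 1) = 2 by ring, two_norm hp] at this
    have h3 := max_lt h2.2.2.2.1 h1.2.2.2.1
    rw [pow_zero] at h3
    linarith
  rw [Z0_zero hp, measureReal_union hd (meas_mulVec _ (meas_Ecell ..))
    (f _ fun y hy => hsub y (Or.inl hy)) (f _ fun y hy => hsub y (Or.inr hy)),
    hμ.preimage gV_mem (meas_Ecell ..), hμ.preimage gV_mem (meas_Ecell ..)] at hZ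
  have hZ1 := Z1_zero hp hμ
  rw [Orb_measure hp hμ 0 hfin]
  set a := μ.real (Ecell 0 (0 : ℚ_[p]) 0 0 0)
  set z := μ.real (Zset (p := p) 0)
  set z₁ := μ.real {y : Fin 5 → ℚ_[p] | y ∈ Zset 0 ∧ ‖y 0‖ < (p : ℝ) ^ 0}
  field_simp
  linear_combination (-(p : ℝ)) * hZ1 + (p : ℝ) ^ 2 * hZ - c1 - c2

end

/-- split case: for any `G`-invariant measure `μ` concentrated on the
sphere `S`, finite on each orbit `O_r` and positive on `O₀`, one has
`μ(O_r) = p^{3r}(1 − p^{−2})·μ(O₀)` for all `r ≥ 1`. -/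
theorem stmt_8 (hp : p ≠ 2) (μ : Measure (Fin 5 → ℚ_[p]))
    (hS : μ (Ssph p)ᶜ = 0)
    (hfin : ∀ r : ℕ, μ (Orb p r) < ⊤)
    (hpos : 0 < μ (Orb p 0))
    (hinv : ∀ g ∈ SO32 p, Measure.map (fun v => g.mulVec v) μ = μ) :
    ∀ r : ℕ, 1 ≤ r →
      μ (Orb p r) = (p : ℝ≥0∞) ^ (3 * r) * (1 - ((p : ℝ≥0∞) ^ 2)⁻¹) * μ (Orb p 0) := by
  intro r hr
  have hpR := one_lt_pR (p := p)
  have hp1 : (p : ℝ) - 1 ≠ 0 := by linarith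
  have h0 := Orb_real_zero hp hinv (hfin 0)
  have h1 := Orb_real_pos hp hinv hr (hfin r)
  rw [chart_scale hinv r] at h1
  have hle : ((p : ℝ≥0∞) ^ 2)⁻¹ ≤ 1 := by
    rw [ENNReal.inv_le_one]
    exact one_le_pow₀ (by exact_mod_cast (Fact.out : p.Prime).one_lt.le)
  have hne : (p : ℝ≥0∞) ^ (3 * r) * (1 - ((p : ℝ≥0∞) ^ 2)⁻¹) * μ (Orb p 0) ≠ ⊤ :=
    ENNReal.mul_ne_top (ENNReal.mul_ne_top (by finiteness) (by finiteness)) (hfin 0).ne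
  rw [← ENNReal.toReal_eq_toReal_iff' (hfin r).ne hne, ENNReal.toReal_mul, ENNReal.toReal_mul,
    ENNReal.toReal_sub_of_le hle (by simp), ← measureReal_def, ← measureReal_def, h1]
  simp only [ENNReal.toReal_pow, ENNReal.toReal_natCast, ENNReal.toReal_one, ENNReal.toReal_inv]
  rw [← eq_div_iff (by positivity)] at h0
  rw [h0]
  field_simp
  ring

end
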